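/- Local decodability lemma for cyclic storage: for every PIR scheme with cyclic-graph storage on N servers and every index k ∈ {1,…,N}, the message W_k is determined by the answers of the two servers storing it together with the other messages and the queries, i.e., H(W_k | A_k^{[k]}, A_{k+1}^{[k]}, (W_j)_{j≠k}, 𝒬) = 0 (indices mod N); consequently H(A_k^{[k]}, A_{k+1}^{[k]} | (W_j)_{j≠k}, 𝒬) ≥ L. -/

import Mathlib

/-!
Everything reduces to two facts about finite entropies. First, `Hc X Y = 0` says exactly that
`X` is a function of `Y` on the support of the probability measure (`Hc_eq_zero_iff`), so the
determinism and decodability hypotheses, and the first claim, become statements about functions.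
A server other than `k` and `k + 1` does not store `W k`, hence its answer is a function of the
other messages and the queries; together with the answers of the servers `k` and `k + 1` this gives
the whole answer vector, from which `W k` is decoded.

Secondly, entropy is monotone (`H_le_of_det`) and subadditive (`H_pair_le`). Writing `A` for the
pair of answers, `V` for the other messages and `𝒬` for the queries, the first claim gives
`H(A, V, 𝒬) = H(W k, A, V, 𝒬) ≥ H(all messages, 𝒬) = N L + H(𝒬)`, while
`H(V, 𝒬) ≤ (N - 1) L + H(𝒬)`. Subtracting yields `H(A | V, 𝒬) ≥ L`.
-/

/-!
Formalization of PIR with arbitrary privacy requirement sets.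

A PIR scheme with `N` servers and `K` messages of equal length `L > 0` is modeled
by finitely-valued random variables on a common finite probability space:
messages `W 1, …, W K`, and for each server `n ∈ [1:N]` and desired index
`k ∈ [1:K]`, a query `Q n k` and an answer `A n k`.  Shannon entropy,
conditional entropy and (conditional) mutual information are defined from the
probability mass function `p`.
-/

open scoped Classical BigOperators

noncomputable section

/-- A PIR scheme: a finite probability space together with the message, query and
answer random variables.  Only the variables indexed by `n ∈ [1:N]`, `k ∈ [1:K]`
are meaningful; all random variables are finitely valued (`ℕ`-valued on a finite
sample space). -/
structure PIRScheme (N K : ℕ) (L : ℝ) where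
  /-- the sample space -/
  Ω : Type
  [fin : Fintype Ω]
  /-- the probability mass function -/
  p : Ω → ℝ
  p_nonneg : ∀ ω, 0 ≤ p ω
  p_sum : ∑ ω : Ω, p ω = 1
  /-- the messages `W i`, `i ∈ [1:K]` -/
  W : ℕ → Ω → ℕ
  /-- `Q n k` is the query sent to server `n` when retrieving message `k` -/
  Q : ℕ → ℕ → Ω → ℕ
  /-- `A n k` is the answer of server `n` when retrieving message `k` -/
  A : ℕ → ℕ → Ω → ℕ

attribute [instance] PIRScheme.fin

namespace PIRScheme

variable {N K : ℕ} {L : ℝ} (S : PIRScheme N K L)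

/-- `P[X = v]`. -/
def prob {α : Type*} (X : S.Ω → α) (v : α) : ℝ :=
  ∑ ω : S.Ω, if X ω = v then S.p ω else 0

/-- Shannon entropy `H(X)`. -/
def H {α : Type*} (X : S.Ω → α) : ℝ :=
  - ∑ ω : S.Ω, S.p ω * Real.log (S.prob X (X ω))

/-- Conditional entropy `H(X | Y) := H(X, Y) - H(Y)`. -/
def Hc {α β : Type*} (X : S.Ω → α) (Y : S.Ω → β) : ℝ :=
  S.H (fun ω => (X ω, Y ω)) - S.H Y

/-- Mutual information `I(X ; Y) := H(X) + H(Y) - H(X, Y)`. -/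
def MI {α β : Type*} (X : S.Ω → α) (Y : S.Ω → β) : ℝ :=
  S.H X + S.H Y - S.H (fun ω => (X ω, Y ω))

/-- Conditional mutual information `I(X ; Y | Z) := H(X|Z) + H(Y|Z) - H(X,Y|Z)`. -/
def MIc {α β γ : Type*} (X : S.Ω → α) (Y : S.Ω → β) (Z : S.Ω → γ) : ℝ :=
  S.Hc X Z + S.Hc Y Z - S.Hc (fun ω => (X ω, Y ω)) Z

/-- The joint random variable `(W j)_{j ∈ T}` of a subcollection of the messages. -/
def jointW (T : Finset ℕ) : S.Ω → (T → ℕ) := fun ω j => S.W j ω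

/-- The joint random variable of all `K` messages. -/
def allW : S.Ω → (Finset.Icc 1 K → ℕ) := S.jointW (Finset.Icc 1 K)

/-- `𝒬`: the tuple of all queries `Q n k`, `n ∈ [1:N]`, `k ∈ [1:K]`. -/
def allQ : S.Ω → ((Finset.Icc 1 N ×ˢ Finset.Icc 1 K : Finset (ℕ × ℕ)) → ℕ) :=
  fun ω x => S.Q x.1.1 x.1.2 ω

/-- The tuple of answers `(A 1 k, …, A N k)` when retrieving message `k`. -/
def ansVec (k : ℕ) : S.Ω → (Finset.Icc 1 N → ℕ) := fun ω n => S.A n k ω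

/-- The download cost `D k := ∑_{n=1}^N H(A n k)`. -/
def D (k : ℕ) : ℝ := ∑ n ∈ Finset.Icc 1 N, S.H (S.A n k)

/-- The rate `R := K ⬝ L / ∑_{k=1}^K D k`. -/
def rate : ℝ := (K * L) / ∑ k ∈ Finset.Icc 1 K, S.D k

/-- Validity of a PIR scheme with respect to storage index sets `I n` and privacy
requirement sets `P n`:
(messages) the messages each have entropy `L` and are mutually independent;
(i) the messages are independent of all the queries;
(ii) each answer is a function of the server's storage and received query;
(iii) privacy: for all `θ1, θ2 ∈ P n` and every subcollection `T` of the messages,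
  the answer of server `n` has the same conditional entropy whether `θ1` or `θ2`
  is being retrieved;
(iv) decodability: message `k` is determined by all the answers and the queries. -/
structure IsValid (S : PIRScheme N K L) (I P : ℕ → Finset ℕ) : Prop where
  msg_entropy : ∀ i ∈ Finset.Icc 1 K, S.H (S.W i) = L
  msg_indep : S.H S.allW = ∑ i ∈ Finset.Icc 1 K, S.H (S.W i)
  stor_sub_priv : ∀ n ∈ Finset.Icc 1 N, I n ⊆ P n
  priv_sub : ∀ n ∈ Finset.Icc 1 N, P n ⊆ Finset.Icc 1 K
  query_indep : S.MI S.allW S.allQ = 0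
  ans_det : ∀ n ∈ Finset.Icc 1 N, ∀ k ∈ Finset.Icc 1 K,
    S.Hc (S.A n k) (fun ω => (S.jointW (I n) ω, S.Q n k ω)) = 0
  privacy : ∀ n ∈ Finset.Icc 1 N, ∀ θ1 ∈ P n, ∀ θ2 ∈ P n, ∀ T ⊆ Finset.Icc 1 K,
    S.Hc (S.A n θ1) (fun ω => (S.jointW T ω, S.allQ ω)) =
      S.Hc (S.A n θ2) (fun ω => (S.jointW T ω, S.allQ ω))
  decodable : ∀ k ∈ Finset.Icc 1 K, S.Hc (S.W k) (fun ω => (S.ansVec k ω, S.allQ ω)) = 0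

end PIRScheme

/-- Path-graph storage on `N` servers (`K = N - 1` messages):
`𝒲_1 = {W 1}`, `𝒲_n = {W (n-1), W n}` for `2 ≤ n ≤ N - 1`, `𝒲_N = {W (N-1)}`. -/
def pathIndex (N : ℕ) : ℕ → Finset ℕ := fun n =>
  if n = 1 then {1} else if n = N then {N - 1} else {n - 1, n}

/-- Modified-edge-server privacy sets on the path graph:
`𝒫_1 = 𝒫_2 = {1, 2}`, `𝒫_N = 𝒫_{N-1} = {N-2, N-1}`, and `𝒫_n = {n-1, n}`
for `2 ≤ n ≤ N - 1`. -/
def pathModEdgePriv (N : ℕ) : ℕ → Finset ℕ := fun n =>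
  if n ≤ 2 then {1, 2} else if N - 1 ≤ n then {N - 2, N - 1} else {n - 1, n}

/-- The representative of `m` modulo `N` lying in `{1, …, N}` (so that index `0`
is identified with index `N`). -/
def cyc (N : ℕ) (m : ℤ) : ℕ := (((m - 1) % (N : ℤ)) + 1).toNat

/-- Cyclic-graph storage on `N` servers (`K = N` messages):
`𝒲_n = {W (n-1), W n}` with indices mod `N`, i.e. `ℐ_n = {n - 1, n} (mod N)`. -/
def cycIndex (N : ℕ) : ℕ → Finset ℕ := fun n => {cyc N ((n : ℤ) - 1), cyc N (n : ℤ)}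

/-- The cyclic interval `[a : a + len - 1]` of `len` consecutive indices mod `N`,
as a subset of `{1, …, N}`. -/
def cycInterval (N : ℕ) (a : ℤ) (len : ℕ) : Finset ℕ :=
  (Finset.range len).image fun j => cyc N (a + j)

namespace PIRScheme

variable {N K : ℕ} {L : ℝ} (S : PIRScheme N K L)

/-! ### Functional dependence and vanishing conditional entropy -/

/-- `X` is a function of `Y` on the support of the probability measure. -/
def Det {α β : Type*} (X : S.Ω → α) (Y : S.Ω → β) : Prop :=
  ∀ ω ω', S.p ω ≠ 0 → S.p ω' ≠ 0 → Y ω = Y ω' → X ω = X ω'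

lemma prob_nonneg {α : Type*} (X : S.Ω → α) (v : α) : 0 ≤ S.prob X v := by
  unfold prob
  refine Finset.sum_nonneg fun ω _ => ?_
  split_ifs
  · exact S.p_nonneg ω
  · exact le_rfl

lemma le_prob {α : Type*} (X : S.Ω → α) (ω : S.Ω) : S.p ω ≤ S.prob X (X ω) := by
  unfold prob
  have h := Finset.single_le_sum (f := fun ω' => if X ω' = X ω then S.p ω' else 0)
    (fun ω' _ => by
      split_ifs
      · exact S.p_nonneg ω'
      · exact le_rfl) (Finset.mem_univ ω)
  simpa using h

lemma prob_pos {α : Type*} (X : S.Ω → α) {ω : S.Ω} (h : S.p ω ≠ 0) : 0 < S.prob X (X ω) :=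
  lt_of_lt_of_le (lt_of_le_of_ne (S.p_nonneg ω) h.symm) (S.le_prob X ω)

variable {S} in
lemma Det.prob_le {α β : Type*} {X : S.Ω → α} {Y : S.Ω → β} (h : S.Det X Y) {ω : S.Ω}
    (hω : S.p ω ≠ 0) : S.prob Y (Y ω) ≤ S.prob X (X ω) := by
  unfold prob
  refine Finset.sum_le_sum fun ω' _ => ?_
  by_cases h0 : S.p ω' = 0
  · simp [h0]
  by_cases hY : Y ω' = Y ω
  · simp [hY, h ω' ω h0 hω hY]
  · rw [if_neg hY]
    split_ifs
    · exact S.p_nonneg ω'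
    · exact le_rfl

variable {S} in
lemma Det.term_le {α β : Type*} {X : S.Ω → α} {Y : S.Ω → β} (h : S.Det X Y) (ω : S.Ω) :
    S.p ω * Real.log (S.prob Y (Y ω)) ≤ S.p ω * Real.log (S.prob X (X ω)) := by
  by_cases h0 : S.p ω = 0
  · simp [h0]
  · exact mul_le_mul_of_nonneg_left
      (Real.log_le_log (S.prob_pos Y h0) (h.prob_le h0)) (S.p_nonneg ω)

/-- Entropy is monotone: a function of `Y` has at most the entropy of `Y`. -/
lemma H_le_of_det {α β : Type*} {X : S.Ω → α} {Y : S.Ω → β} (h : S.Det X Y) :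
    S.H X ≤ S.H Y :=
  neg_le_neg (Finset.sum_le_sum fun ω _ => h.term_le ω)

lemma Hc_eq_zero_iff {α β : Type*} (X : S.Ω → α) (Y : S.Ω → β) :
    S.Hc X Y = 0 ↔ S.Det X Y := by
  have hdet : S.Det Y (fun ω => (X ω, Y ω)) := fun ω ω' _ _ h => congrArg Prod.snd h
  constructor
  · intro h ω ω' h0 h0' hY
    by_contra hX
    have hsum : ∑ ω, S.p ω * Real.log (S.prob (fun ω => (X ω, Y ω)) (X ω, Y ω))
        = ∑ ω, S.p ω * Real.log (S.prob Y (Y ω)) := by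
      simp only [Hc, H] at h
      linarith
    -- The two entropies compare term by term, so equality of the sums is equality of the terms.
    have hterm := (Finset.sum_eq_sum_iff_of_le fun ω _ => hdet.term_le ω).1 hsum
      ω (Finset.mem_univ ω)
    have hprob : S.prob (fun ω => (X ω, Y ω)) (X ω, Y ω) = S.prob Y (Y ω) :=
      Real.log_injOn_pos (S.prob_pos (fun ω => (X ω, Y ω)) h0) (S.prob_pos Y h0)
        (mul_left_cancel₀ h0 hterm)
    -- The point `ω'` contributes to `P[Y = Y ω]` but not to `P[(X, Y) = (X ω, Y ω)]`.
    have hlt : S.prob (fun ω => (X ω, Y ω)) (X ω, Y ω) < S.prob Y (Y ω) := by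
      unfold prob
      refine Finset.sum_lt_sum (fun i _ => ?_) ⟨ω', Finset.mem_univ _, ?_⟩
      · by_cases hYi : Y i = Y ω
        · by_cases hXi : X i = X ω
          · simp [hYi, hXi]
          · simp [hYi, hXi, S.p_nonneg i]
        · simp [hYi]
      · have : X ω' ≠ X ω := fun e => hX e.symm
        simp only [Prod.mk.injEq, this, false_and, if_false, hY, if_true]
        exact lt_of_le_of_ne (S.p_nonneg ω') h0'.symm
    exact absurd hprob hlt.ne
  · intro h
    have h1 : S.H (fun ω => (X ω, Y ω)) ≤ S.H Y :=
      S.H_le_of_det fun ω ω' h0 h0' hY => Prod.ext (h ω ω' h0 h0' hY) hY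
    have h2 := S.H_le_of_det hdet
    unfold Hc
    linarith

/-! ### Subadditivity of entropy -/

lemma sum_prob {α : Type*} (X : S.Ω → α) : ∑ x ∈ Finset.univ.image X, S.prob X x = 1 := by
  unfold prob
  rw [Finset.sum_comm, ← S.p_sum]
  refine Finset.sum_congr rfl fun ω _ => ?_
  rw [Finset.sum_ite_eq, if_pos (Finset.mem_image_of_mem X (Finset.mem_univ ω))]

/-- The expectation of `P[X] P[Y] / P[(X, Y)]` is at most `1`; it can be smaller, because pairs
`(x, y)` with `P[(X, Y) = (x, y)] = 0` do not contribute. -/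
lemma sum_ratio_le {α β : Type*} (X : S.Ω → α) (Y : S.Ω → β) :
    ∑ ω, S.p ω * (S.prob X (X ω) * S.prob Y (Y ω) /
      S.prob (fun ω => (X ω, Y ω)) (X ω, Y ω)) ≤ 1 := by
  have hfib : ∀ ω, S.p ω * (S.prob X (X ω) * S.prob Y (Y ω) /
      S.prob (fun ω => (X ω, Y ω)) (X ω, Y ω)) =
      ∑ z ∈ Finset.univ.image X ×ˢ Finset.univ.image Y,
        (if (X ω, Y ω) = z then S.p ω else 0) *
          (S.prob X z.1 * S.prob Y z.2 / S.prob (fun ω => (X ω, Y ω)) z) := by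
    intro ω
    simp only [ite_mul, zero_mul]
    rw [Finset.sum_ite_eq, if_pos]
    simp
  calc _ = ∑ z ∈ Finset.univ.image X ×ˢ Finset.univ.image Y,
        S.prob (fun ω => (X ω, Y ω)) z *
          (S.prob X z.1 * S.prob Y z.2 / S.prob (fun ω => (X ω, Y ω)) z) := by
        rw [Finset.sum_congr rfl fun ω _ => hfib ω, Finset.sum_comm]
        refine Finset.sum_congr rfl fun z _ => ?_
        rw [← Finset.sum_mul]
        unfold prob
        congr!
    _ ≤ ∑ z ∈ Finset.univ.image X ×ˢ Finset.univ.image Y, S.prob X z.1 * S.prob Y z.2 := by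
        refine Finset.sum_le_sum fun z _ => ?_
        by_cases h0 : S.prob (fun ω => (X ω, Y ω)) z = 0
        · rw [h0, zero_mul]
          exact mul_nonneg (S.prob_nonneg X _) (S.prob_nonneg Y _)
        · rw [mul_div_cancel₀ _ h0]
    _ = 1 := by
        rw [Finset.sum_product]
        simp only [← Finset.mul_sum, S.sum_prob, mul_one]

/-- Subadditivity of entropy, from `log t ≤ t - 1` applied to `t = P[X] P[Y] / P[(X, Y)]`. -/
lemma H_pair_le {α β : Type*} (X : S.Ω → α) (Y : S.Ω → β) :
    S.H (fun ω => (X ω, Y ω)) ≤ S.H X + S.H Y := by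
  have hterm : ∀ ω, S.p ω * Real.log (S.prob X (X ω)) + S.p ω * Real.log (S.prob Y (Y ω))
      - S.p ω * Real.log (S.prob (fun ω => (X ω, Y ω)) (X ω, Y ω)) ≤
      S.p ω * (S.prob X (X ω) * S.prob Y (Y ω) /
        S.prob (fun ω => (X ω, Y ω)) (X ω, Y ω)) - S.p ω := by
    intro ω
    by_cases h0 : S.p ω = 0
    · simp [h0]
    have hX := S.prob_pos X h0
    have hY := S.prob_pos Y h0
    have hXY : 0 < S.prob (fun ω => (X ω, Y ω)) (X ω, Y ω) :=
      S.prob_pos (fun ω => (X ω, Y ω)) h0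
    have hlog := Real.log_le_sub_one_of_pos (div_pos (mul_pos hX hY) hXY)
    rw [Real.log_div (mul_pos hX hY).ne' hXY.ne', Real.log_mul hX.ne' hY.ne'] at hlog
    have := mul_le_mul_of_nonneg_left hlog (S.p_nonneg ω)
    linarith
  have hsum := Finset.sum_le_sum fun ω (_ : ω ∈ Finset.univ) => hterm ω
  simp only [Finset.sum_sub_distrib, Finset.sum_add_distrib, S.p_sum] at hsum
  have := S.sum_ratio_le X Y
  unfold H
  linarith

lemma H_jointW_le (T : Finset ℕ) : S.H (S.jointW T) ≤ ∑ i ∈ T, S.H (S.W i) := by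
  induction T using Finset.induction_on with
  | empty =>
    have h : S.H (S.jointW ∅) ≤ S.H (fun _ => ()) :=
      S.H_le_of_det fun _ _ _ _ _ => Subsingleton.elim _ _
    simpa [H, prob, S.p_sum] using h
  | insert a T ha ih =>
    have h : S.H (S.jointW (insert a T)) ≤ S.H (fun ω => (S.W a ω, S.jointW T ω)) := by
      refine S.H_le_of_det fun ω ω' _ _ h => ?_
      rw [Prod.mk.injEq] at h
      funext ⟨j, hj⟩
      rcases Finset.mem_insert.1 hj with rfl | hj
      · exact h.1
      · exact congrFun h.2 ⟨j, hj⟩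
    rw [Finset.sum_insert ha]
    linarith [S.H_pair_le (S.W a) (S.jointW T)]

end PIRScheme

/-! ### Indices modulo `N` -/

lemma cyc_of_mem {N n : ℕ} (h1 : 1 ≤ n) (h2 : n ≤ N) : cyc N (n : ℤ) = n := by
  unfold cyc
  rw [Int.emod_eq_of_lt (by omega) (by omega)]
  omega

lemma cyc_add_N (N : ℕ) (m : ℤ) : cyc N (m + N) = cyc N m := by
  unfold cyc
  rw [show m + N - 1 = m - 1 + N by ring, Int.add_emod_right]

lemma cyc_mem {N : ℕ} (hN : 1 ≤ N) (m : ℤ) : cyc N m ∈ Finset.Icc 1 N := by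
  have h1 := Int.emod_nonneg (m - 1) (b := (N : ℤ)) (by omega)
  have h2 := Int.emod_lt_of_pos (m - 1) (b := (N : ℤ)) (by omega)
  rw [Finset.mem_Icc]
  unfold cyc
  omega

/-- Only the servers `k` and `k + 1` (mod `N`) store the message `W k`. -/
lemma eq_or_eq_of_mem_cycIndex {N n k : ℕ} (hn : n ∈ Finset.Icc 1 N)
    (h : k ∈ cycIndex N n) : n = k ∨ n = cyc N ((k : ℤ) + 1) := by
  rw [Finset.mem_Icc] at hn
  rw [cycIndex, Finset.mem_insert, Finset.mem_singleton, cyc_of_mem hn.1 hn.2] at h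
  rcases h with h | h
  · right
    rcases Nat.eq_or_lt_of_le hn.1 with h1 | h1
    · -- For `n = 1` the predecessor `0` is represented by `N`.
      have hk : k = N := by
        rw [h, ← cyc_add_N, show (n : ℤ) - 1 + N = (N : ℕ) by omega]
        exact cyc_of_mem (by omega) le_rfl
      rw [hk, add_comm, cyc_add_N]
      have := cyc_of_mem hn.1 hn.2
      rw [← h1] at this ⊢
      exact this.symm
    · have hk : k = n - 1 := by
        rw [h, show (n : ℤ) - 1 = ((n - 1 : ℕ) : ℤ) by omega]
        exact cyc_of_mem (by omega) (by omega)
      rw [hk, show ((n - 1 : ℕ) : ℤ) + 1 = (n : ℤ) by omega]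
      exact (cyc_of_mem hn.1 hn.2).symm
  · exact Or.inl h.symm

/-! ### Local decodability -/

/-- **Local decodability lemma for cyclic storage**: for every PIR scheme with
cyclic-graph storage on `N` servers (with any privacy sets `P`) and every index
`k ∈ [1:N]`, the message `W k` is determined by the answers of the two servers
storing it (servers `k` and `k+1 (mod N)`), the other messages, and the queries:
`H(W k | A k k, A (k+1) k, (W j)_{j ≠ k}, 𝒬) = 0`; consequently
`H(A k k, A (k+1) k | (W j)_{j ≠ k}, 𝒬) ≥ L`. -/
theorem cyclic_local_decodability (N : ℕ) (hN : 3 ≤ N) (L : ℝ) (hL : 0 < L)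
    (S : PIRScheme N N L) (P : ℕ → Finset ℕ) (hS : S.IsValid (cycIndex N) P)
    (k : ℕ) (hk : k ∈ Finset.Icc 1 N) :
    S.Hc (S.W k)
        (fun ω => ((S.A k k ω, S.A (cyc N ((k : ℤ) + 1)) k ω),
          (S.jointW (Finset.Icc 1 N \ {k}) ω, S.allQ ω))) = 0 ∧
      L ≤ S.Hc (fun ω => (S.A k k ω, S.A (cyc N ((k : ℤ) + 1)) k ω))
            (fun ω => (S.jointW (Finset.Icc 1 N \ {k}) ω, S.allQ ω)) := by
  have hdet : S.Det (S.W k)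
      (fun ω => ((S.A k k ω, S.A (cyc N ((k : ℤ) + 1)) k ω),
        (S.jointW (Finset.Icc 1 N \ {k}) ω, S.allQ ω))) := by
    intro ω ω' h0 h0' h
    simp only [Prod.mk.injEq] at h
    obtain ⟨⟨hA, hA'⟩, hW, hQ⟩ := h
    refine (S.Hc_eq_zero_iff _ _).1 (hS.decodable k hk) ω ω' h0 h0' (Prod.ext ?_ hQ)
    funext ⟨n, hn⟩
    change S.A n k ω = S.A n k ω'
    by_cases hnk : k ∈ cycIndex N n
    · rcases eq_or_eq_of_mem_cycIndex hn hnk with h | h <;> rw [h] <;> assumption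
    · refine (S.Hc_eq_zero_iff _ _).1 (hS.ans_det n hn k hk) ω ω' h0 h0' (Prod.ext ?_ ?_)
      · funext ⟨j, hj⟩
        have hjN : j ∈ Finset.Icc 1 N := by
          rw [cycIndex, Finset.mem_insert, Finset.mem_singleton] at hj
          rcases hj with rfl | rfl <;> exact cyc_mem (by omega) _
        have hjk : j ≠ k := by
          rintro rfl
          exact hnk hj
        exact congrFun hW ⟨j, by simpa [hjk] using hjN⟩
      · exact congrFun hQ ⟨(n, k), Finset.mem_product.2 ⟨hn, hk⟩⟩
  have hzero := (S.Hc_eq_zero_iff _ _).2 hdet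
  refine ⟨hzero, ?_⟩
  have hmono : S.H (fun ω => (S.allW ω, S.allQ ω)) ≤ S.H (fun ω => (S.W k ω,
      ((S.A k k ω, S.A (cyc N ((k : ℤ) + 1)) k ω),
        (S.jointW (Finset.Icc 1 N \ {k}) ω, S.allQ ω)))) := by
    refine S.H_le_of_det fun ω ω' _ _ h => ?_
    simp only [Prod.mk.injEq] at h
    obtain ⟨hk', _, hW, hQ⟩ := h
    refine Prod.ext ?_ hQ
    funext ⟨j, hj⟩
    by_cases hjk : j = k
    · subst hjk
      exact hk'
    · exact congrFun hW ⟨j, by simpa [hjk] using hj⟩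
  have hother := S.H_jointW_le (Finset.Icc 1 N \ {k})
  have hpair := S.H_pair_le (S.jointW (Finset.Icc 1 N \ {k})) S.allQ
  have hsplit : ∑ i ∈ Finset.Icc 1 N, S.H (S.W i)
      = ∑ i ∈ Finset.Icc 1 N \ {k}, S.H (S.W i) + L := by
    rw [← Finset.sum_sdiff (Finset.singleton_subset_iff.2 hk), Finset.sum_singleton,
      hS.msg_entropy k hk]
  have hind := hS.query_indep
  have hmsg := hS.msg_indep
  unfold PIRScheme.Hc at hzero ⊢
  unfold PIRScheme.MI at hind
  linarith
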